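/- Let R be a commutative ring and let I, J be finitely generated ideals of R. Then √I ⊆ √J if and only if Loc(R/J) ⊆ Loc(R/I). Consequently √I = √J if and only if Loc(R/I) = Loc(R/J). -/

import Mathlib

open CategoryTheory CategoryTheory.Limits CategoryTheory.Pretriangulated ZeroObject

universe w w' v u

section TriangulatedDefs

variable {T : Type u} [Category.{v} T] [Preadditive T] [HasZeroObject T]
  [HasShift T ℤ] [∀ n : ℤ, (shiftFunctor T n).Additive] [Pretriangulated T]

/-- A localizing subcategory of a (pre)triangulated category, encoded as a set of
objects: it is closed under isomorphisms, contains the zero object, is stable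
under shifts, closed under cones of distinguished triangles (hence a full
triangulated subcategory), and closed under arbitrary small coproducts
(phrased via colimit cofans, so that no global existence of coproducts
is needed). -/
structure IsLocalizingSub (S : Set T) : Prop where
  zero_mem : (0 : T) ∈ S
  mem_of_iso : ∀ {x y : T}, (x ≅ y) → x ∈ S → y ∈ S
  shift_mem : ∀ (n : ℤ) {x : T}, x ∈ S → x⟦n⟧ ∈ S
  cone_mem : ∀ (Tr : Triangle T), Tr ∈ distinguishedTriangles →
    Tr.obj₁ ∈ S → Tr.obj₂ ∈ S → Tr.obj₃ ∈ S
  coprod_mem : ∀ {ι : Type w} (f : ι → T) (c : Cofan f), IsColimit c →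
    (∀ i, f i ∈ S) → c.pt ∈ S

/-- A colocalizing subcategory: as `IsLocalizingSub` but with products instead
of coproducts. -/
structure IsColocalizingSub (S : Set T) : Prop where
  zero_mem : (0 : T) ∈ S
  mem_of_iso : ∀ {x y : T}, (x ≅ y) → x ∈ S → y ∈ S
  shift_mem : ∀ (n : ℤ) {x : T}, x ∈ S → x⟦n⟧ ∈ S
  cone_mem : ∀ (Tr : Triangle T), Tr ∈ distinguishedTriangles →
    Tr.obj₁ ∈ S → Tr.obj₂ ∈ S → Tr.obj₃ ∈ S
  prod_mem : ∀ {ι : Type w} (f : ι → T) (c : Fan f), IsLimit c →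
    (∀ i, f i ∈ S) → c.pt ∈ S

/-- `Loc S`: the smallest localizing subcategory containing the set of
objects `S` (the intersection of all localizing subcategories containing it). -/
def Loc (S : Set T) : Set T :=
  ⋂₀ {L : Set T | IsLocalizingSub.{w} L ∧ S ⊆ L}

/-- The right orthogonal of a set of objects. -/
def rightOrth (C : Set T) : Set T :=
  {x : T | ∀ ⦃c : T⦄, c ∈ C → ∀ (g : c ⟶ x), g = 0}

end TriangulatedDefs

section CompactDefs

variable {T : Type u} [Category.{v} T] [Preadditive T]

/-- The canonical comparison map `⨁ᵢ Hom(x, fᵢ) →+ Hom(x, ∐ f)` associated to a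
cofan `c` on a family `f`. -/
noncomputable def cofanHomComparison {ι : Type w} (x : T) (f : ι → T) (c : Cofan f) :
    (Π₀ i, (x ⟶ f i)) →+ (x ⟶ c.pt) :=
  letI := Classical.decEq ι
  DFinsupp.sumAddHom (fun i => AddMonoidHom.mk' (fun φ => φ ≫ c.inj i)
    (fun φ ψ => Preadditive.add_comp _ _ _ φ ψ (c.inj i)))

/-- An object `x` is compact if `Hom(x, -)` commutes with arbitrary small
coproducts, i.e. for every colimit cofan on a family `f`, the canonical map
`⨁ᵢ Hom(x, fᵢ) → Hom(x, ∐ f)` is bijective. -/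
def IsCompactObj (x : T) : Prop :=
  ∀ ⦃ι : Type w⦄ (f : ι → T) (c : Cofan f), IsColimit c →
    Function.Bijective (cofanHomComparison x f c)

end CompactDefs

section DR

variable (R : Type u) [CommRing R] [HasDerivedCategory.{w'} (ModuleCat.{u} R)]

/-- The `R`-module `M`, regarded as an object of the derived category `D(R)`,
as a complex concentrated in degree `0`. -/
noncomputable def smod (M : ModuleCat.{u} R) : DerivedCategory (ModuleCat.{u} R) :=
  (DerivedCategory.singleFunctor (ModuleCat.{u} R) 0).obj M

end DR

/-!
Suppose `√I ⊆ √J` and let `S = Loc(R/I)`. A module `M` annihilated by `I` has a resolution by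
direct sums of copies of `R/I`. Its syzygies `N₀ = M, N₁, N₂, …` sit in triangles whose connecting
maps form a tower `N₀ → N₁[1] → N₂[2] → ⋯`, all of whose maps have cone in `S`. These maps vanish on
homology for degree reasons, so the homotopy colimit of the tower is zero. Comparing with the
constant tower on `M`, whose homotopy colimit is `M`, shows `M ∈ S`; no truncation or boundedness of
the resolution is needed. Extensions then give all modules annihilated by a power of `I`, and `R/J`
is one because `I` is finitely generated.

Conversely, for `x ∈ I` the objects with no nonzero map to an object on which `x` acts invertibly
form a localizing subcategory containing `R/I`. If it contains `R/J`, the localization map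
`R/J → (R/J)ₓ` is zero, that is, `x ∈ √J`.
-/

section CoproductTriangle

variable {T : Type u} [Category.{v} T] [Preadditive T] [HasZeroObject T]
  [HasShift T ℤ] [∀ n : ℤ, (shiftFunctor T n).Additive] [Pretriangulated T]

theorem exists_eq_shift_mor₁_comp {Tr : Triangle T} (hTr : Tr ∈ distTriang T) {Y : T}
    (f : Tr.obj₁⟦(1 : ℤ)⟧ ⟶ Y) (hf : Tr.mor₃ ≫ f = 0) :
    ∃ g : Tr.obj₂⟦(1 : ℤ)⟧ ⟶ Y, f = Tr.mor₁⟦(1 : ℤ)⟧' ≫ g := by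
  obtain ⟨g, hg⟩ := Triangle.yoneda_exact₃ _ (rot_of_distTriang _ hTr) f hf
  exact ⟨-g, hg.trans ((Preadditive.neg_comp _ _).trans (Preadditive.comp_neg _ _).symm)⟩

variable {ι : Type w} {Tr : ι → Triangle T} {Tr' : Triangle T} (φ : ∀ i, Tr i ⟶ Tr')

theorem eq_zero_of_forall_hom₃_comp_eq_zero
    (hTr : ∀ i, Tr i ∈ distTriang T) (hTr' : Tr' ∈ distTriang T)
    (h₁ : IsColimit (Cofan.mk Tr'.obj₁ fun i => (φ i).hom₁))
    (h₂ : IsColimit (Cofan.mk Tr'.obj₂ fun i => (φ i).hom₂))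
    {Y : T} (g : Tr'.obj₃ ⟶ Y) (hg : ∀ i, (φ i).hom₃ ≫ g = 0) : g = 0 := by
  have h₁' := isColimitCofanMkObjOfIsColimit (shiftFunctor T (1 : ℤ)) _ _ h₁
  have h₂' := isColimitCofanMkObjOfIsColimit (shiftFunctor T (1 : ℤ)) _ _ h₂
  obtain ⟨k, rfl⟩ := Triangle.yoneda_exact₃ Tr' hTr' g <|
    Cofan.IsColimit.hom_ext h₂ _ _ fun i => by
      simp only [cofan_mk_inj, ← reassoc_of% (φ i).comm₂, hg, comp_zero]
  choose l hl using fun i => exists_eq_shift_mor₁_comp (hTr i) ((φ i).hom₁⟦(1 : ℤ)⟧' ≫ k) <| by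
    rw [reassoc_of% (φ i).comm₃, hg]
  have hk : k = Tr'.mor₁⟦(1 : ℤ)⟧' ≫ Cofan.IsColimit.desc h₂' l :=
    Cofan.IsColimit.hom_ext h₁' _ _ fun i => by
      have fac := Cofan.IsColimit.fac h₂' l i
      simp only [cofan_mk_inj] at fac ⊢
      rw [hl, ← Functor.map_comp_assoc, ← (φ i).comm₁, Functor.map_comp_assoc, fac]
  rw [hk, comp_distTriang_mor_zero₃₁_assoc _ hTr', zero_comp]

theorem exists_forall_hom₃_comp_eq
    (hTr : ∀ i, Tr i ∈ distTriang T) (hTr' : Tr' ∈ distTriang T)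
    (h₁ : IsColimit (Cofan.mk Tr'.obj₁ fun i => (φ i).hom₁))
    (h₂ : IsColimit (Cofan.mk Tr'.obj₂ fun i => (φ i).hom₂))
    {Y : T} (y : ∀ i, (Tr i).obj₃ ⟶ Y) : ∃ g : Tr'.obj₃ ⟶ Y, ∀ i, (φ i).hom₃ ≫ g = y i := by
  have h₁' := isColimitCofanMkObjOfIsColimit (shiftFunctor T (1 : ℤ)) _ _ h₁
  let b := Cofan.IsColimit.desc h₂ fun i => (Tr i).mor₂ ≫ y i
  have hb (i) : (φ i).hom₂ ≫ b = (Tr i).mor₂ ≫ y i := Cofan.IsColimit.fac h₂ _ i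
  obtain ⟨g, hg⟩ := Triangle.yoneda_exact₂ Tr' hTr' b <|
    Cofan.IsColimit.hom_ext h₁ _ _ fun i => by
      simp only [cofan_mk_inj, ← reassoc_of% (φ i).comm₁, hb,
        comp_distTriang_mor_zero₁₂_assoc _ (hTr i), zero_comp, comp_zero]
  choose k hk using fun i => Triangle.yoneda_exact₃ (Tr i) (hTr i) (y i - (φ i).hom₃ ≫ g) <| by
    rw [Preadditive.comp_sub, reassoc_of% (φ i).comm₂, ← hg, hb, sub_self]
  have hk' (i) : (φ i).hom₁⟦(1 : ℤ)⟧' ≫ Cofan.IsColimit.desc h₁' k = k i :=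
    Cofan.IsColimit.fac h₁' k i
  refine ⟨g + Tr'.mor₃ ≫ Cofan.IsColimit.desc h₁' k, fun i => ?_⟩
  rw [Preadditive.comp_add, ← reassoc_of% (φ i).comm₃, hk', ← hk, add_sub_cancel]

theorem nonempty_isColimit_cofan_obj₃
    (hTr : ∀ i, Tr i ∈ distTriang T) (hTr' : Tr' ∈ distTriang T)
    (h₁ : IsColimit (Cofan.mk Tr'.obj₁ fun i => (φ i).hom₁))
    (h₂ : IsColimit (Cofan.mk Tr'.obj₂ fun i => (φ i).hom₂)) :
    Nonempty (IsColimit (Cofan.mk Tr'.obj₃ fun i => (φ i).hom₃)) := by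
  choose desc fac using fun s : Cofan fun i => (Tr i).obj₃ =>
    exists_forall_hom₃_comp_eq φ hTr hTr' h₁ h₂ s.inj
  refine ⟨Cofan.IsColimit.mk _ desc fac fun s m hm => sub_eq_zero.1 ?_⟩
  refine eq_zero_of_forall_hom₃_comp_eq_zero φ hTr hTr' h₁ h₂ _ fun i => ?_
  rw [Preadditive.comp_sub, fac, sub_eq_zero]
  exact hm i

end CoproductTriangle

section TowerShift

variable {T : Type u} [Category.{v} T]

/-- The shift endomorphism of the coproduct of a sequence `X 0 ⟶ X 1 ⟶ ⋯`. The cone of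
`𝟙 - towerShift hc s` is the homotopy colimit of the sequence. -/
noncomputable def towerShift {X : ℕ → T} {c : Cofan X} (hc : IsColimit c)
    (s : ∀ n, X n ⟶ X (n + 1)) : c.pt ⟶ c.pt :=
  Cofan.IsColimit.desc hc fun n => s n ≫ c.inj (n + 1)

variable [Preadditive T]

theorem inj_comp_one_sub_towerShift {X : ℕ → T} {c : Cofan X} (hc : IsColimit c)
    (s : ∀ n, X n ⟶ X (n + 1)) (n : ℕ) :
    c.inj n ≫ (𝟙 c.pt - towerShift hc s) = c.inj n - s n ≫ c.inj (n + 1) := by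
  rw [Preadditive.comp_sub, Category.comp_id, towerShift, Cofan.IsColimit.fac]

theorem one_sub_towerShift_comp_eq_zero_iff {X : ℕ → T} {c : Cofan X} (hc : IsColimit c)
    (s : ∀ n, X n ⟶ X (n + 1)) {Y : T} (f : c.pt ⟶ Y) :
    (𝟙 c.pt - towerShift hc s) ≫ f = 0 ↔ ∀ n, c.inj n ≫ f = s n ≫ c.inj (n + 1) ≫ f := by
  have inj_comp (n) : c.inj n ≫ (𝟙 c.pt - towerShift hc s) ≫ f =
      c.inj n ≫ f - s n ≫ c.inj (n + 1) ≫ f := by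
    rw [reassoc_of% inj_comp_one_sub_towerShift hc, Preadditive.sub_comp, Category.assoc]
  refine ⟨fun h n => ?_, fun h => Cofan.IsColimit.hom_ext hc _ _ fun n => ?_⟩
  · rw [← sub_eq_zero, ← inj_comp, h, comp_zero]
  · rw [inj_comp, h, sub_self, comp_zero]

theorem mono_one_sub_towerShift_const {M : T} {c : Cofan fun _ : ℕ => M} (hc : IsColimit c) :
    Mono (𝟙 c.pt - towerShift hc fun _ => 𝟙 M) := by
  let r : c.pt ⟶ c.pt := Cofan.IsColimit.desc hc fun n => -∑ k ∈ Finset.range n, c.inj k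
  have inj_r (n) : c.inj n ≫ r = -∑ k ∈ Finset.range n, c.inj k := Cofan.IsColimit.fac hc _ n
  refine SplitMono.mono ⟨r, Cofan.IsColimit.hom_ext hc _ _ fun n => ?_⟩
  rw [reassoc_of% inj_comp_one_sub_towerShift hc, Preadditive.sub_comp, Category.id_comp, inj_r,
    inj_r, Finset.sum_range_succ, neg_sub_neg, add_sub_cancel_left]
  exact (Category.comp_id _).symm

end TowerShift

section Localizing

variable {T : Type u} [Category.{v} T] [Preadditive T] [HasZeroObject T]
  [HasShift T ℤ] [∀ n : ℤ, (shiftFunctor T n).Additive] [Pretriangulated T]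

theorem trW_of_comp_right [IsTriangulated T] {P : ObjectProperty T} [P.IsTriangulated]
    {X Y Z : T} {f : X ⟶ Y} {g : Y ⟶ Z} (hfg : P.trW (f ≫ g)) (hg : P.trW g) : P.trW f := by
  rw [← P.trW_isoClosure] at *
  obtain ⟨_, _, _, hTfg, memfg⟩ := hfg
  obtain ⟨_, _, _, hTg, memg⟩ := hg
  obtain ⟨_, _, _, hTf⟩ := distinguished_cocone_triangle f
  exact ⟨_, _, _, hTf, P.isoClosure.ext_of_isTriangulatedClosed₁ _
    (Triangulated.someOctahedron rfl hTf hTg hTfg).mem memfg memg⟩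

theorem nonempty_iso_of_one_sub_towerShift_const {M K : T} {c : Cofan fun _ : ℕ => M}
    (hc : IsColimit c) {v : c.pt ⟶ K} {δ : K ⟶ c.pt⟦(1 : ℤ)⟧}
    (hT : Triangle.mk (𝟙 c.pt - towerShift hc fun _ => 𝟙 M) v δ ∈ distTriang T) :
    Nonempty (K ≅ M) := by
  have : Epi v := (Triangle.mk _ v δ).epi₂ hT
    (Triangle.mor₃_eq_zero_of_mono₁ _ hT (mono_one_sub_towerShift_const hc))
  let p : c.pt ⟶ M := Cofan.IsColimit.desc hc fun _ => 𝟙 M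
  have inj_p (n) : c.inj n ≫ p = 𝟙 M := Cofan.IsColimit.fac hc _ n
  obtain ⟨q, hq⟩ : ∃ q, p = v ≫ q := Triangle.yoneda_exact₂ _ hT p <|
    (one_sub_towerShift_comp_eq_zero_iff hc _ p).2 fun n => by
      rw [inj_p, inj_p, Category.comp_id]
  have inj_v (n) : c.inj n ≫ v = c.inj 0 ≫ v := by
    induction n with
    | zero => rfl
    | succ n ih =>
      have h := (one_sub_towerShift_comp_eq_zero_iff hc _ v).1 (comp_distTriang_mor_zero₁₂ _ hT) n
      rw [← ih, h, Category.id_comp]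
  refine ⟨q, c.inj 0 ≫ v, ?_, ?_⟩
  · rw [← cancel_epi v, ← reassoc_of% hq, Category.comp_id]
    exact Cofan.IsColimit.hom_ext hc _ _ fun n => by rw [reassoc_of% inj_p n, inj_v n]
  · rw [Category.assoc, ← hq, inj_p]

namespace IsLocalizingSub

variable {S : Set T} (hS : IsLocalizingSub.{w} S)
include hS

theorem isTriangulated : ObjectProperty.IsTriangulated (· ∈ S) where
  exists_zero := ⟨0, isZero_zero T, hS.zero_mem⟩
  isStableUnderShiftBy n := ⟨fun _ hX => hS.shift_mem n hX⟩
  ext₂' Tr hTr h₁ h₃ := ObjectProperty.le_isoClosure _ _ <|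
    hS.mem_of_iso ((shiftEquiv T (1 : ℤ)).unitIso.symm.app Tr.obj₂) <| hS.shift_mem (-1) <|
      hS.cone_mem _ (rot_of_distTriang _ (rot_of_distTriang _ hTr)) h₃ (hS.shift_mem 1 h₁)

theorem isClosedUnderIsomorphisms : ObjectProperty.IsClosedUnderIsomorphisms (· ∈ S) where
  of_iso := hS.mem_of_iso

theorem obj₂_mem {Tr : Triangle T} (hTr : Tr ∈ distTriang T) (h₁ : Tr.obj₁ ∈ S)
    (h₃ : Tr.obj₃ ∈ S) : Tr.obj₂ ∈ S :=
  have := hS.isTriangulated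
  have := hS.isClosedUnderIsomorphisms
  ObjectProperty.ext_of_isTriangulatedClosed₂ (· ∈ S) Tr hTr h₁ h₃

theorem coprod_mem_of_small {ι : Type*} [Small.{w} ι] {f : ι → T} {c : Cofan f}
    (hc : IsColimit c) (hf : ∀ i, f i ∈ S) : c.pt ∈ S :=
  hS.coprod_mem _ _ (c.isColimitEquivOfEquiv (equivShrink ι).symm hc) fun _ => hf _

theorem trW_of_isColimit {ι : Type*} [Small.{w} ι] {X Y : ι → T} {c : Cofan X} {d : Cofan Y}
    (hc : IsColimit c) (hd : IsColimit d) (g : c.pt ⟶ d.pt) {f : ∀ i, X i ⟶ Y i}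
    (hg : ∀ i, c.inj i ≫ g = f i ≫ d.inj i)
    (hf : ∀ i, ObjectProperty.trW (· ∈ S) (f i)) : ObjectProperty.trW (· ∈ S) g := by
  choose Z v δ hT hZ using hf
  obtain ⟨K, v', δ', hT'⟩ := distinguished_cocone_triangle g
  let φ (i) : Triangle.mk (f i) (v i) (δ i) ⟶ Triangle.mk g v' δ' :=
    completeDistinguishedTriangleMorphism _ _ (hT i) hT' (c.inj i) (d.inj i) (hg i).symm
  obtain ⟨hK⟩ := nonempty_isColimit_cofan_obj₃ φ hT hT' hc hd
  exact ⟨K, v', δ', hT', hS.coprod_mem_of_small hK hZ⟩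

theorem mem_of_isIso_one_sub_towerShift [IsTriangulated T] {X : ℕ → T}
    {s : ∀ n, X n ⟶ X (n + 1)} (hs : ∀ n, ObjectProperty.trW (· ∈ S) (s n)) {c : Cofan X}
    (hc : IsColimit c) (hcs : IsIso (𝟙 c.pt - towerShift hc s)) {d : Cofan fun _ : ℕ => X 0}
    (hd : IsColimit d) : X 0 ∈ S := by
  have := hS.isTriangulated
  have := hS.isClosedUnderIsomorphisms
  let e : ∀ n, X 0 ⟶ X n := Nat.rec (𝟙 _) fun n f => f ≫ s n
  have he (n) : ObjectProperty.trW (· ∈ S) (e n) := by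
    induction n with
    | zero => exact MorphismProperty.id_mem _ _
    | succ n ih => exact MorphismProperty.comp_mem _ _ _ ih (hs n)
  have e_comp (n) : e n ≫ s n = e (n + 1) := rfl
  let g : d.pt ⟶ c.pt := Cofan.IsColimit.desc hd fun n => e n ≫ c.inj n
  have inj_g (n) : d.inj n ≫ g = e n ≫ c.inj n := Cofan.IsColimit.fac hd _ n
  have hg : ObjectProperty.trW (· ∈ S) g := hS.trW_of_isColimit hd hc g inj_g he
  have comm : (𝟙 d.pt - towerShift hd fun _ => 𝟙 (X 0)) ≫ g = g ≫ (𝟙 c.pt - towerShift hc s) :=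
    Cofan.IsColimit.hom_ext hd _ _ fun n => by
      rw [reassoc_of% inj_comp_one_sub_towerShift hd, Preadditive.sub_comp, Category.id_comp,
        inj_g, inj_g, reassoc_of% inj_g, inj_comp_one_sub_towerShift, Preadditive.comp_sub,
        reassoc_of% e_comp]
  have hM : ObjectProperty.trW (· ∈ S) (𝟙 d.pt - towerShift hd fun _ => 𝟙 (X 0)) :=
    trW_of_comp_right (g := g) (comm ▸ (MorphismProperty.cancel_right_of_respectsIso _ _ _).2 hg) hg
  obtain ⟨K, v, δ, hT, hK⟩ := hM
  obtain ⟨i⟩ := nonempty_iso_of_one_sub_towerShift_const hd hT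
  exact hS.mem_of_iso i hK

end IsLocalizingSub

theorem isLocalizingSub_leftOrthogonal (P : ObjectProperty T) [P.IsStableUnderShift ℤ] :
    IsLocalizingSub.{w} {X | P.leftOrthogonal X} where
  zero_mem := P.leftOrthogonal.prop_zero
  mem_of_iso i := (P.leftOrthogonal.prop_iff_of_iso i).1
  shift_mem n _ := P.leftOrthogonal.le_shift n _
  cone_mem Tr hTr := P.leftOrthogonal.ext_of_isTriangulatedClosed₃ Tr hTr
  coprod_mem _ _ hc hf _ _ hY :=
    Cofan.IsColimit.hom_ext hc _ _ fun i => (hf i _ hY).trans comp_zero.symm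

theorem subset_Loc (S : Set T) : S ⊆ Loc.{w} S :=
  Set.subset_sInter fun _ h => h.2

theorem isLocalizingSub_Loc (S : Set T) : IsLocalizingSub.{w} (Loc.{w} S) where
  zero_mem := fun _ h => h.1.zero_mem
  mem_of_iso i hx := fun _ h => h.1.mem_of_iso i (hx _ h)
  shift_mem n _ hx := fun _ h => h.1.shift_mem n (hx _ h)
  cone_mem Tr hTr h₁ h₂ := fun _ h => h.1.cone_mem Tr hTr (h₁ _ h) (h₂ _ h)
  coprod_mem f c hc hf := fun _ h => h.1.coprod_mem f c hc fun i => hf i _ h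

theorem Loc_subset_iff {S L : Set T} (hL : IsLocalizingSub.{w} L) : Loc.{w} S ⊆ L ↔ S ⊆ L :=
  ⟨(subset_Loc S).trans, fun h => Set.sInter_subset_of_mem ⟨hL, h⟩⟩

end Localizing

section HomologyColimits

variable {J C : Type*} [Category* J] [Category* C] [HasColimitsOfShape J C]

instance [HasZeroMorphisms C] {ι : Type*} (c : ComplexShape ι) (i : ι) :
    PreservesColimitsOfShape J (HomologicalComplex.shortComplexFunctor C c i) where
  preservesColimit := ⟨fun h => ⟨ShortComplex.isColimitOfIsColimitπ _
    (isColimitOfPreserves (HomologicalComplex.eval C c _) h)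
    (isColimitOfPreserves (HomologicalComplex.eval C c _) h)
    (isColimitOfPreserves (HomologicalComplex.eval C c _) h)⟩⟩

variable [Abelian C]

/-- The colimit cocone of a diagram of short complexes, given as a short complex of diagrams. It
compares the homology of the colimit with the colimit of the homologies. -/
noncomputable def shortComplexMapColimCocone (S : ShortComplex (J ⥤ C)) :
    Cocone ((ShortComplex.FunctorEquivalence.functor J C).obj S) where
  pt := S.map colim
  ι := { app j := S.mapNatTrans (colim.ι j)
         naturality j k f := by
          ext <;> exact (colimit.w _ f).trans (Category.comp_id _).symm }

theorem nonempty_isColimit_shortComplexMapColimCocone (S : ShortComplex (J ⥤ C)) :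
    Nonempty (IsColimit (shortComplexMapColimCocone S)) :=
  ⟨ShortComplex.isColimitOfIsColimitπ _ (colimit.isColimit S.X₁) (colimit.isColimit S.X₂)
    (colimit.isColimit S.X₃)⟩

theorem preservesColimit_functorEquivalence_obj_homologyFunctor [HasExactColimitsOfShape J C]
    (S : ShortComplex (J ⥤ C)) :
    PreservesColimit ((ShortComplex.FunctorEquivalence.functor J C).obj S)
      (ShortComplex.homologyFunctor C) := by
  obtain ⟨hS⟩ := nonempty_isColimit_shortComplexMapColimCocone S
  let α : (ShortComplex.FunctorEquivalence.functor J C).obj S ⋙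
      ShortComplex.homologyFunctor C ≅ S.homology :=
    NatIso.ofComponents (fun j => S.mapHomologyIso ((evaluation J C).obj j)) fun f =>
      ((Iso.eq_inv_comp _).1 (NatTrans.app_homology ((evaluation J C).map f) S)).symm
  let β : (Cocone.precompose α.inv).obj ((ShortComplex.homologyFunctor C).mapCocone
      (shortComplexMapColimCocone S)) ≅ colimit.cocone S.homology :=
    Cocone.ext (S.mapHomologyIso colim) fun j => by
      dsimp [shortComplexMapColimCocone, α]
      rw [Category.assoc]
      exact (NatTrans.app_homology (colim.ι j) S).symm
  exact preservesColimit_of_preserves_colimit_cocone hS <|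
    (IsColimit.equivOfNatIsoOfIso α _ _ β).symm (colimit.isColimit _)

instance [HasExactColimitsOfShape J C] :
    PreservesColimitsOfShape J (ShortComplex.homologyFunctor C) where
  preservesColimit {F} :=
    let S := (ShortComplex.FunctorEquivalence.inverse J C).obj F
    have := preservesColimit_functorEquivalence_obj_homologyFunctor S
    let e : (ShortComplex.FunctorEquivalence.functor J C).obj S ≅ F :=
      (ShortComplex.FunctorEquivalence.counitIso J C).app F
    preservesColimit_of_iso_diagram _ e

instance [HasExactColimitsOfShape J C] {ι : Type*} (c : ComplexShape ι) (i : ι) :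
    PreservesColimitsOfShape J (HomologicalComplex.homologyFunctor C c i) :=
  preservesColimitsOfShape_of_natIso (HomologicalComplex.homologyFunctorIso C c i).symm

end HomologyColimits

section EssSurj

variable {ι : Type*} {C D E : Type*} [Category* C] [Category* D] [Category* E]

theorem exists_discrete_comp_iso (L : C ⥤ D) [L.EssSurj] (F : Discrete ι ⥤ D) :
    ∃ G : Discrete ι ⥤ C, Nonempty (G ⋙ L ≅ F) :=
  ⟨Discrete.functor fun i => L.objPreimage (F.obj ⟨i⟩),
    ⟨Discrete.natIso fun i => L.objObjPreimageIso (F.obj i)⟩⟩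

theorem preservesCoproductsOfShape_of_existsUnique (L : C ⥤ D) [L.EssSurj]
    (h : ∀ {X : ι → C} {c : Cofan X} (_ : IsColimit c) {Y : C} (f : ∀ i, L.obj (X i) ⟶ L.obj Y),
      ∃! g : L.obj c.pt ⟶ L.obj Y, ∀ i, L.map (c.inj i) ≫ g = f i) :
    PreservesColimitsOfShape (Discrete ι) L :=
  have (X : ι → C) : PreservesColimit (Discrete.functor X) L := ⟨fun {c : Cofan X} hc => by
    let e (d : Cofan fun i => L.obj (X i)) := L.objObjPreimageIso d.pt
    choose g hg hg' using fun d : Cofan fun i => L.obj (X i) => h hc fun i => d.inj i ≫ (e d).inv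
    refine ⟨(Cofan.isColimitMapCoconeEquiv _ _ _).symm <|
      Cofan.IsColimit.mk _ (fun d => g d ≫ (e d).hom) (fun d i => ?_) fun d m hm => ?_⟩
    · exact (Category.assoc _ _ _).symm.trans ((Iso.comp_inv_eq _).1 (hg d i).symm).symm
    · rw [← Iso.comp_inv_eq]
      exact hg' d _ fun i => by rw [← hm, Category.assoc]; rfl⟩
  preservesColimitsOfShape_of_discrete L

variable [HasCoproductsOfShape ι C] (L : C ⥤ D) [L.EssSurj]
  [PreservesColimitsOfShape (Discrete ι) L]

include L in
theorem hasCoproductsOfShape_of_essSurj : HasCoproductsOfShape ι D where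
  has_colimit F := by
    obtain ⟨G, ⟨e⟩⟩ := exists_discrete_comp_iso L F
    exact hasColimit_of_iso e.symm

theorem preservesCoproductsOfShape_of_essSurj (H : D ⥤ E)
    [PreservesColimitsOfShape (Discrete ι) (L ⋙ H)] :
    PreservesColimitsOfShape (Discrete ι) H where
  preservesColimit {F} := by
    obtain ⟨G, ⟨e⟩⟩ := exists_discrete_comp_iso L F
    have : PreservesColimit (G ⋙ L) H := preservesColimit_of_preserves_colimit_cocone
      (isColimitOfPreserves L (colimit.isColimit G))
      (isColimitOfPreserves (L ⋙ H) (colimit.isColimit G))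
    exact preservesColimit_of_iso_diagram H e

end EssSurj

section Fractions

variable {ι : Type*} {C D : Type*} [Category* C] [Category* D] (L : C ⥤ D)
  (W : MorphismProperty C) [L.IsLocalization W] [W.IsStableUnderCoproductsOfShape ι]

theorem mem_of_isColimit_cofan {X Y : ι → C} {c : Cofan X} {d : Cofan Y} (hc : IsColimit c)
    (hd : IsColimit d) {f : ∀ i, X i ⟶ Y i} (hf : ∀ i, W (f i)) {g : c.pt ⟶ d.pt}
    (hg : ∀ i, c.inj i ≫ g = f i ≫ d.inj i) : W g :=
  MorphismProperty.IsStableUnderColimitsOfShape.condition _ _ c d hc hd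
    (Discrete.natTrans fun i => f i.as) (fun i => hf i.as) g fun i => hg i.as

theorem exists_forall_map_inj_comp_eq [HasCoproductsOfShape ι C] [W.HasRightCalculusOfFractions]
    {X : ι → C} {c : Cofan X} (hc : IsColimit c) {Y : C} (f : ∀ i, L.obj (X i) ⟶ L.obj Y) :
    ∃ g : L.obj c.pt ⟶ L.obj Y, ∀ i, L.map (c.inj i) ≫ g = f i := by
  choose φ hφ using fun i => Localization.exists_rightFraction L W (f i)
  let s : ∐ (fun i => (φ i).X') ⟶ c.pt := Sigma.desc fun i => (φ i).s ≫ c.inj i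
  have ι_s (i) : Sigma.ι _ i ≫ s = (φ i).s ≫ c.inj i := Sigma.ι_desc _ i
  have hs : W s :=
    mem_of_isColimit_cofan W (coproductIsCoproduct _) hc (fun i => (φ i).hs) ι_s
  have := Localization.inverts L W s hs
  refine ⟨inv (L.map s) ≫ L.map (Sigma.desc fun i => (φ i).f), fun i => ?_⟩
  have := Localization.inverts L W (φ i).s (φ i).hs
  rw [← cancel_epi (L.map (φ i).s), hφ, MorphismProperty.RightFraction.map_s_comp_map,
    ← L.map_comp_assoc, ← ι_s, L.map_comp_assoc, IsIso.hom_inv_id_assoc, ← L.map_comp,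
    Sigma.ι_desc]

theorem eq_of_forall_map_inj_comp_eq [HasCoproductsOfShape ι C] [W.HasLeftCalculusOfFractions]
    [W.HasRightCalculusOfFractions] {X : ι → C} {c : Cofan X} (hc : IsColimit c) {Y : C}
    {f g : L.obj c.pt ⟶ L.obj Y} (h : ∀ i, L.map (c.inj i) ≫ f = L.map (c.inj i) ≫ g) :
    f = g := by
  obtain ⟨φ, hf, hg⟩ := Localization.exists_leftFraction₂ L W f g
  replace hf : f ≫ L.map φ.s = L.map φ.f := by rw [hf]; exact φ.fst.map_comp_map_s L _
  replace hg : g ≫ L.map φ.s = L.map φ.f' := by rw [hg]; exact φ.snd.map_comp_map_s L _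
  have map_eq (i) : L.map (c.inj i ≫ φ.f) = L.map (c.inj i ≫ φ.f') := by
    rw [L.map_comp, L.map_comp, ← hf, ← hg, reassoc_of% h i]
  choose X' t ht hX using fun i => (MorphismProperty.map_eq_iff_precomp L W _ _).1 (map_eq i)
  let s : ∐ X' ⟶ c.pt := Sigma.desc fun i => t i ≫ c.inj i
  have ι_s (i) : Sigma.ι _ i ≫ s = t i ≫ c.inj i := Sigma.ι_desc _ i
  have hs : W s := mem_of_isColimit_cofan W (coproductIsCoproduct _) hc ht ι_s
  have := Localization.inverts L W s hs
  have s_comp : s ≫ φ.f = s ≫ φ.f' := Sigma.hom_ext _ _ fun i => by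
    rw [reassoc_of% ι_s, reassoc_of% ι_s, hX]
  rw [← cancel_mono (L.map φ.s), hf, hg, ← cancel_epi (L.map s), ← L.map_comp, s_comp,
    L.map_comp]

theorem preservesCoproductsOfShape_of_isLocalization [HasCoproductsOfShape ι C]
    [W.HasLeftCalculusOfFractions] [W.HasRightCalculusOfFractions] :
    PreservesColimitsOfShape (Discrete ι) L :=
  have := Localization.essSurj L W
  preservesCoproductsOfShape_of_existsUnique L fun hc _ f => by
    obtain ⟨g, hg⟩ := exists_forall_map_inj_comp_eq L W hc f
    exact ⟨g, hg, fun g' hg' => eq_of_forall_map_inj_comp_eq L W hc fun i => by rw [hg', hg]⟩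

end Fractions

section HomotopyCategory

variable {ι κ : Type*} {V : Type*} [Category* V] [Preadditive V] [HasCoproductsOfShape ι V]
  {σ : ComplexShape κ}

theorem nonempty_homotopy_zero_of_isColimit_cofan {K : ι → HomologicalComplex V σ} {c : Cofan K}
    (hc : IsColimit c) {L : HomologicalComplex V σ} {g : c.pt ⟶ L}
    (h : ∀ i, Nonempty (Homotopy (c.inj i ≫ g) 0)) : Nonempty (Homotopy g 0) := by
  let H (i) := (h i).some
  have hcX (n) := Cofan.isColimitMapCoconeEquiv _ _ _
    (isColimitOfPreserves (HomologicalComplex.eval V σ n) hc)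
  let s (n m : κ) : c.pt.X n ⟶ L.X m := Cofan.IsColimit.desc (hcX n) fun i => (H i).hom n m
  have inj_s (i) (n m : κ) : (c.inj i).f n ≫ s n m = (H i).hom n m :=
    Cofan.IsColimit.fac (hcX n) _ i
  refine ⟨⟨s, fun n m hnm => Cofan.IsColimit.hom_ext (hcX n) _ _ fun i => ?_,
    fun n => Cofan.IsColimit.hom_ext (hcX n) _ _ fun i => ?_⟩⟩
  · exact (inj_s i n m).trans (((H i).zero n m hnm).trans comp_zero.symm)
  · have inj_s' : (fun n m => (c.inj i).f n ≫ s n m) = (H i).hom := funext₂ (inj_s i)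
    have comm : (c.inj i).f n ≫ g.f n = _ := (H i).comm n
    rw [← inj_s', dNext_comp_left, prevD_comp_left, HomologicalComplex.zero_f, add_zero,
      ← Preadditive.comp_add] at comm
    rw [HomologicalComplex.zero_f, add_zero]
    exact comm

instance : PreservesColimitsOfShape (Discrete ι) (HomotopyCategory.quotient V σ) :=
  preservesCoproductsOfShape_of_existsUnique _ fun {K c} hc L f => by
    choose φ hφ using fun i => (HomotopyCategory.quotient V σ).map_surjective (f i)
    refine ⟨(HomotopyCategory.quotient V σ).map (Cofan.IsColimit.desc hc φ), fun i => ?_,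
      fun g hg => ?_⟩
    · rw [← Functor.map_comp, Cofan.IsColimit.fac, hφ]
    · obtain ⟨ψ, rfl⟩ := (HomotopyCategory.quotient V σ).map_surjective g
      rw [← sub_eq_zero, ← Functor.map_sub, HomotopyCategory.quotient_map_eq_zero_iff]
      refine nonempty_homotopy_zero_of_isColimit_cofan hc fun i => ?_
      rw [← HomotopyCategory.quotient_map_eq_zero_iff, Preadditive.comp_sub, Functor.map_sub,
        Functor.map_comp, hg, Cofan.IsColimit.fac, hφ, sub_self]

end HomotopyCategory

section HomotopyCategoryHomology

variable {ι κ : Type*} {C : Type*} [Category* C] [Abelian C] [HasCoproductsOfShape ι C]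
  (σ : ComplexShape κ)

instance : HasCoproductsOfShape ι (HomotopyCategory C σ) :=
  hasCoproductsOfShape_of_essSurj (HomotopyCategory.quotient C σ)

variable [HasExactColimitsOfShape (Discrete ι) C]

instance (n : κ) : PreservesColimitsOfShape (Discrete ι) (HomotopyCategory.homologyFunctor C σ n) :=
  have := preservesColimitsOfShape_of_natIso (J := Discrete ι)
    (HomotopyCategory.homologyFunctorFactors C σ n).symm
  preservesCoproductsOfShape_of_essSurj (HomotopyCategory.quotient C σ) _

instance : (HomotopyCategory.quasiIso C σ).IsStableUnderCoproductsOfShape ι where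
  condition _ _ _ _ hc hd f hf φ hφ n := by
    refine MorphismProperty.IsStableUnderColimitsOfShape.condition (W := .isomorphisms C) _ _ _ _
      (isColimitOfPreserves (HomotopyCategory.homologyFunctor C σ n) hc)
      (isColimitOfPreserves _ hd) (Functor.whiskerRight f _) (fun i => hf i n) _ fun i => ?_
    simp [← Functor.map_comp, hφ]

end HomotopyCategoryHomology

section DerivedCategory

variable {ι : Type*} {C : Type u} [Category.{v} C] [Abelian C] [HasDerivedCategory.{w} C]
  [HasCoproductsOfShape ι C] [HasExactColimitsOfShape (Discrete ι) C]

instance : PreservesColimitsOfShape (Discrete ι) (DerivedCategory.Qh (C := C)) :=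
  preservesCoproductsOfShape_of_isLocalization _ (HomotopyCategory.quasiIso C _)

instance : PreservesColimitsOfShape (Discrete ι) (DerivedCategory.Q (C := C)) :=
  preservesColimitsOfShape_of_natIso (DerivedCategory.quotientCompQhIso C)

instance : HasCoproductsOfShape ι (DerivedCategory C) :=
  hasCoproductsOfShape_of_essSurj DerivedCategory.Q

instance (n : ℤ) : PreservesColimitsOfShape (Discrete ι) (DerivedCategory.homologyFunctor C n) :=
  have := preservesColimitsOfShape_of_natIso (J := Discrete ι)
    (DerivedCategory.homologyFunctorFactors C n).symm
  preservesCoproductsOfShape_of_essSurj DerivedCategory.Q _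

instance (n : ℤ) : PreservesColimitsOfShape (Discrete ι) (DerivedCategory.singleFunctor C n) :=
  have : PreservesColimitsOfShape (Discrete ι) (CochainComplex.singleFunctor C n) :=
    inferInstanceAs (PreservesColimitsOfShape _ (HomologicalComplex.single C _ n))
  preservesColimitsOfShape_of_natIso (DerivedCategory.singleFunctorIsoCompQ C n).symm

end DerivedCategory

section Resolution

variable {C : Type u} [Category.{v} C] [Abelian C] [HasDerivedCategory.{w} C]

theorem homologyFunctor_map_eq_zero_of_isGE_of_isLE {X Y : DerivedCategory C} {a b : ℤ}
    (hba : b < a) [X.IsGE a] [Y.IsLE b] (f : X ⟶ Y) (k : ℤ) :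
    (DerivedCategory.homologyFunctor C k).map f = 0 := by
  rcases lt_or_ge k a with hk | hk
  · exact (X.isZero_of_isGE a k hk).eq_of_src _ _
  · exact (Y.isZero_of_isLE b k (hba.trans_le hk)).eq_of_tgt _ _

theorem IsLocalizingSub.trW_singleδ {S : Set (DerivedCategory C)}
    (hS : IsLocalizingSub.{w'} S) {E : ShortComplex C} (hE : E.ShortExact)
    (h : (DerivedCategory.singleFunctor C 0).obj E.X₂ ∈ S) :
    ObjectProperty.trW (· ∈ S) hE.singleδ :=
  .mk _ (rot_of_distTriang _ (rot_of_distTriang _ hE.singleTriangle_distinguished))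
    (hS.shift_mem 1 h)

variable [HasCoproductsOfShape ℕ C] [HasExactColimitsOfShape (Discrete ℕ) C]

theorem isIso_one_sub_towerShift {X : ℕ → DerivedCategory C} {c : Cofan X} (hc : IsColimit c)
    {s : ∀ n, X n ⟶ X (n + 1)}
    (hs : ∀ n k, (DerivedCategory.homologyFunctor C k).map (s n) = 0) :
    IsIso (𝟙 c.pt - towerShift hc s) := by
  refine (DerivedCategory.isIso_iff C _).2 fun k => ?_
  have hHc := Cofan.isColimitMapCoconeEquiv _ _ _
    (isColimitOfPreserves (DerivedCategory.homologyFunctor C k) hc)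
  have map_towerShift : (DerivedCategory.homologyFunctor C k).map (towerShift hc s) = 0 :=
    Cofan.IsColimit.hom_ext hHc _ _ fun n => by
      refine ((Functor.map_comp _ _ _).symm.trans ?_).trans comp_zero.symm
      rw [towerShift, Cofan.IsColimit.fac, Functor.map_comp, hs, zero_comp]
  rw [Functor.map_sub, map_towerShift, sub_zero]
  infer_instance

namespace IsLocalizingSub

variable {S : Set (DerivedCategory C)} (hS : IsLocalizingSub.{w'} S)
include hS

theorem singleFunctor_obj_mem_of_resolution {E : ℕ → ShortComplex C}
    (hE : ∀ n, (E n).ShortExact) (e : ∀ n, (E n).X₁ ≅ (E (n + 1)).X₃)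
    (h : ∀ n, (DerivedCategory.singleFunctor C 0).obj (E n).X₂ ∈ S) :
    (DerivedCategory.singleFunctor C 0).obj (E 0).X₃ ∈ S := by
  have := hS.isTriangulated
  have := hS.isClosedUnderIsomorphisms
  let X (n : ℕ) := ((DerivedCategory.singleFunctor C 0).obj (E n).X₃)⟦(n : ℤ)⟧
  let s (n) : X n ⟶ X (n + 1) :=
    ((hE n).singleδ ≫ ((DerivedCategory.singleFunctor C 0).map (e n).hom)⟦1⟧')⟦(n : ℤ)⟧' ≫
      (shiftFunctorAdd' _ 1 (n : ℤ) ((n + 1 : ℕ) : ℤ) (by lia)).inv.app _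
  have hs (n) : ObjectProperty.trW (· ∈ S) (s n) := by
    refine (MorphismProperty.cancel_right_of_respectsIso _ _ _).2 (ObjectProperty.trW.shift ?_ _)
    exact (MorphismProperty.cancel_right_of_respectsIso _ _ _).2 (hS.trW_singleδ (hE n) (h n))
  have isGE (n : ℕ) : (X n).IsGE (-n) := DerivedCategory.TStructure.t.isGE_shift _ 0 _ _
  have isLE (n : ℕ) : (X n).IsLE (-n) := DerivedCategory.TStructure.t.isLE_shift _ 0 _ _
  have homology_s (n k) : (DerivedCategory.homologyFunctor C k).map (s n) = 0 :=
    homologyFunctor_map_eq_zero_of_isGE_of_isLE (a := -n) (b := -(n + 1 : ℕ)) (by lia) _ k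
  have hX := coproductIsCoproduct X
  refine hS.mem_of_iso ((shiftFunctorZero _ ℤ).app _) ?_
  exact hS.mem_of_isIso_one_sub_towerShift hs hX (isIso_one_sub_towerShift hX homology_s)
    (coproductIsCoproduct fun _ => X 0)

theorem singleFunctor_obj_mem_of_forall_exists_epi (B : ObjectProperty C)
    (hB : ∀ M, B M → ∃ (P : C) (p : P ⟶ M), Epi p ∧ B (kernel p) ∧
      (DerivedCategory.singleFunctor C 0).obj P ∈ S) {M : C} (hM : B M) :
    (DerivedCategory.singleFunctor C 0).obj M ∈ S := by
  choose P p hp hker hP using fun M : B.FullSubcategory => hB M.obj M.property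
  let N : ℕ → B.FullSubcategory := Nat.rec ⟨M, hM⟩ fun _ N => ⟨kernel (p N), hker N⟩
  exact hS.singleFunctor_obj_mem_of_resolution
    (E := fun n => ShortComplex.mk (kernel.ι (p (N n))) _ (kernel.condition _))
    (fun n => { exact := ShortComplex.exact_kernel _ }) (fun _ => Iso.refl _) fun n => hP (N n)

end IsLocalizingSub

end Resolution

section Annihilators

theorem exists_surjective_directSum_quotient {R : Type*} [CommRing R] {I : Ideal R} {M : Type*}
    [AddCommGroup M] [Module R M] (hM : I ≤ Module.annihilator R M) :
    ∃ p : DirectSum M (fun _ => R ⧸ I) →ₗ[R] M, Function.Surjective p := by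
  classical
  have I_le_ker (m : M) : I ≤ (LinearMap.toSpanSingleton R M m).ker := fun x hx =>
    Module.mem_annihilator.1 (hM hx) m
  refine ⟨DirectSum.toModule R M M fun m => I.liftQ _ (I_le_ker m), fun m =>
    ⟨DirectSum.lof R M _ m (Submodule.Quotient.mk 1), ?_⟩⟩
  rw [DirectSum.toModule_lof, Submodule.liftQ_apply, LinearMap.toSpanSingleton_apply, one_smul]

theorem le_annihilator_directSum {R ι : Type*} [CommRing R] {M : ι → Type*}
    [∀ i, AddCommGroup (M i)] [∀ i, Module R (M i)] {I : Ideal R}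
    (hM : ∀ i, I ≤ Module.annihilator R (M i)) : I ≤ Module.annihilator R (DirectSum ι M) :=
  (le_iInf hM).trans Module.annihilator_dfinsupp.ge

theorem annihilator_le_of_mono {R : Type*} [Ring R] {M N : ModuleCat R} (f : M ⟶ N) [Mono f] :
    Module.annihilator R N ≤ Module.annihilator R M :=
  f.hom.annihilator_le_of_injective ((ModuleCat.mono_iff_injective f).1 inferInstance)

end Annihilators

section Modules

variable {R : Type u} [CommRing R] [HasDerivedCategory.{w'} (ModuleCat.{u} R)]

namespace IsLocalizingSub

variable {S : Set (DerivedCategory (ModuleCat.{u} R))}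
variable (hS : IsLocalizingSub.{u} S) {I : Ideal R}
include hS

theorem smod_directSum_mem {ι : Type u} {M : ι → Type u} [∀ i, AddCommGroup (M i)]
    [∀ i, Module R (M i)] (hM : ∀ i, smod R (.of R (M i)) ∈ S) :
    smod R (.of R (DirectSum ι M)) ∈ S := by
  classical
  exact hS.coprod_mem _ _ (Cofan.isColimitMapCoconeEquiv _ _ _ <| isColimitOfPreserves
    (DerivedCategory.singleFunctor (ModuleCat.{u} R) 0)
    (ModuleCat.coproductCoconeIsColimit fun i => .of R (M i))) hM

theorem smod_mem_of_le_annihilator (hI : smod R (.of R (R ⧸ I)) ∈ S) {M : ModuleCat.{u} R}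
    (hM : I ≤ Module.annihilator R M) : smod R M ∈ S := by
  refine hS.singleFunctor_obj_mem_of_forall_exists_epi
    (fun M : ModuleCat.{u} R => I ≤ Module.annihilator R M) (fun M hM => ?_) hM
  obtain ⟨p, hp⟩ := exists_surjective_directSum_quotient hM
  have hI' : I ≤ Module.annihilator R (DirectSum M fun _ => R ⧸ I) :=
    le_annihilator_directSum fun _ => Ideal.annihilator_quotient.ge
  exact ⟨_, ModuleCat.ofHom p, (ModuleCat.epi_iff_surjective _).2 hp,
    hI'.trans (annihilator_le_of_mono (kernel.ι (ModuleCat.ofHom p))),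
    hS.smod_directSum_mem fun _ => hI⟩

theorem smod_mem_of_surjective {M N : Type u} [AddCommGroup M] [Module R M] [AddCommGroup N]
    [Module R N] {f : M →ₗ[R] N} (hf : Function.Surjective f) (hker : smod R (.of R f.ker) ∈ S)
    (hN : smod R (.of R N) ∈ S) : smod R (.of R M) ∈ S :=
  hS.obj₂_mem (LinearMap.shortExact_shortComplexKer hf).singleTriangle_distinguished hker hN

theorem smod_mem_of_pow_le_annihilator (hI : smod R (.of R (R ⧸ I)) ∈ S) {n : ℕ} {M : Type u}
    [AddCommGroup M] [Module R M] (hM : I ^ n ≤ Module.annihilator R M) :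
    smod R (.of R M) ∈ S := by
  induction n generalizing M with
  | zero =>
    rw [pow_zero, Ideal.one_eq_top] at hM
    exact hS.smod_mem_of_le_annihilator hI (le_top.trans hM)
  | succ n ih =>
    let N : Submodule R M := I • ⊤
    refine hS.smod_mem_of_surjective N.mkQ_surjective (ih ?_)
      (hS.smod_mem_of_le_annihilator hI ?_)
    · rwa [Submodule.ker_mkQ, Submodule.le_annihilator_iff, ← Submodule.mul_smul, ← pow_succ,
        ← Submodule.le_annihilator_iff, Submodule.annihilator_top]
    · rw [Submodule.annihilator_quotient]
      exact fun x hx => Submodule.mem_colon.2 fun m _ =>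
        Submodule.smul_mem_smul hx Submodule.mem_top

end IsLocalizingSub

theorem smod_quotient_mem_Loc_of_radical_le {I J : Ideal R} (hI : I.FG)
    (h : I.radical ≤ J.radical) :
    smod R (.of R (R ⧸ J)) ∈ Loc.{u} {smod R (.of R (R ⧸ I))} := by
  obtain ⟨n, hn⟩ := Ideal.exists_pow_le_of_le_radical_of_fg (Ideal.le_radical.trans h) hI
  exact (isLocalizingSub_Loc _).smod_mem_of_pow_le_annihilator (subset_Loc _ (Set.mem_singleton _))
    (hn.trans Ideal.annihilator_quotient.ge)

end Modules

section InvertibleAction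

variable {R : Type*} [CommRing R] {T T' : Type*} [Category* T] [Preadditive T] [Linear R T]
  [Category* T'] [Preadditive T'] [Linear R T']

/-- The objects of an `R`-linear category on which `x : R` acts invertibly. Objects killed by `x`
lie in its left orthogonal. -/
def smulInvertible (T : Type*) [Category* T] [Preadditive T] [Linear R T] (x : R) :
    ObjectProperty T :=
  fun Z => IsIso (x • 𝟙 Z)

theorem smulInvertible_obj (F : T ⥤ T') [F.Linear R] {x : R} {Z : T}
    (hZ : smulInvertible T x Z) : smulInvertible T' x (F.obj Z) := by
  have : IsIso (x • 𝟙 Z) := hZ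
  rw [smulInvertible, ← F.map_id, ← F.map_smul]
  infer_instance

instance (x : R) [HasShift T ℤ] [∀ n : ℤ, (shiftFunctor T n).Linear R] :
    (smulInvertible T x).IsStableUnderShift ℤ where
  isStableUnderShiftBy n := ⟨fun _ => smulInvertible_obj (shiftFunctor T n)⟩

theorem leftOrthogonal_smulInvertible {x : R} {X : T} (hX : x • 𝟙 X = 0) :
    (smulInvertible T x).leftOrthogonal X := fun Z f (hZ : IsIso (x • 𝟙 Z)) => by
  rw [← cancel_mono (x • 𝟙 Z), zero_comp, Linear.comp_smul, Category.comp_id, ← Category.id_comp f,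
    ← Linear.smul_comp, hX, zero_comp]

theorem leftOrthogonal_smulInvertible_of_obj (F : T ⥤ T') [F.Additive] [F.Linear R] [F.Faithful]
    {x : R} {X : T} (hX : (smulInvertible T' x).leftOrthogonal (F.obj X)) :
    (smulInvertible T x).leftOrthogonal X := fun _ _ hZ =>
  F.map_eq_zero_iff.1 (hX _ (smulInvertible_obj F hZ))

end InvertibleAction

section Modules

variable {R : Type u} [CommRing R] {I J : Ideal R} {x : R}

theorem smul_id_quotient_eq_zero (hx : x ∈ I) : x • 𝟙 (ModuleCat.of R (R ⧸ I)) = 0 :=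
  ModuleCat.hom_ext <| LinearMap.ext <| Module.mem_annihilator.1 <|
    Ideal.annihilator_quotient.ge hx

theorem smulInvertible_localizedModule (M : Type u) [AddCommGroup M] [Module R M] :
    smulInvertible (ModuleCat.{u} R) x (.of R (LocalizedModule (.powers x) M)) :=
  (ConcreteCategory.isIso_iff_bijective _).2 <| (Module.End.isUnit_iff _).1 <|
    IsLocalizedModule.map_units (LocalizedModule.mkLinearMap (.powers x) M)
      ⟨x, Submonoid.mem_powers x⟩

theorem mem_radical_of_leftOrthogonal
    (h : (smulInvertible (ModuleCat.{u} R) x).leftOrthogonal (.of R (R ⧸ J))) : x ∈ J.radical := by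
  let f := LocalizedModule.mkLinearMap (.powers x) (R ⧸ J)
  have f_eq_zero : f = 0 :=
    congrArg ModuleCat.Hom.hom (h (ModuleCat.ofHom f) (smulInvertible_localizedModule _))
  have f_one : f (Ideal.Quotient.mk J 1) = 0 := by rw [f_eq_zero, LinearMap.zero_apply]
  obtain ⟨⟨_, n, rfl⟩, hn⟩ := (IsLocalizedModule.eq_zero_iff (.powers x) f).1 f_one
  refine ⟨n, Ideal.Quotient.eq_zero_iff_mem.1 ?_⟩
  rwa [Submonoid.smul_def, Algebra.smul_def, map_one, mul_one] at hn

variable [HasDerivedCategory.{w'} (ModuleCat.{u} R)]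

theorem le_radical_of_smod_quotient_mem_Loc
    (h : smod R (.of R (R ⧸ J)) ∈ Loc.{u} {smod R (.of R (R ⧸ I))}) : I ≤ J.radical := by
  intro x hx
  have smul_id_eq_zero : x • 𝟙 (smod R (.of R (R ⧸ I))) = 0 := by
    rw [smod, ← CategoryTheory.Functor.map_id, ← Functor.map_smul, smul_id_quotient_eq_zero hx,
      Functor.map_zero]
  have Loc_subset : Loc.{u} {smod R (.of R (R ⧸ I))} ⊆
      {X | (smulInvertible (DerivedCategory (ModuleCat.{u} R)) x).leftOrthogonal X} :=
    (Loc_subset_iff (isLocalizingSub_leftOrthogonal _)).2 <|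
      Set.singleton_subset_iff.2 (leftOrthogonal_smulInvertible smul_id_eq_zero)
  exact mem_radical_of_leftOrthogonal <| leftOrthogonal_smulInvertible_of_obj
    (DerivedCategory.singleFunctor (ModuleCat.{u} R) 0) (Loc_subset h)

theorem radical_le_iff_loc_subset_general (I J : Ideal R) (hI : I.FG) :
    I.radical ≤ J.radical ↔
      Loc.{u} {smod R (.of R (R ⧸ J))} ⊆ Loc.{u} {smod R (.of R (R ⧸ I))} := by
  rw [Loc_subset_iff (isLocalizingSub_Loc _), Set.singleton_subset_iff]
  exact ⟨smod_quotient_mem_Loc_of_radical_le hI,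
    fun h => Ideal.radical_le_radical_iff.2 (le_radical_of_smod_quotient_mem_Loc h)⟩

end Modules

/-- Theorem: for finitely generated ideals `I`, `J` of `R`, one has
`√I ⊆ √J ↔ Loc(R/J) ⊆ Loc(R/I)`, and consequently
`√I = √J ↔ Loc(R/I) = Loc(R/J)`. -/
theorem radical_le_iff_loc_subset (R : Type u) [CommRing R]
    [HasDerivedCategory.{w'} (ModuleCat.{u} R)]
    (I J : Ideal R) (hI : I.FG) (hJ : J.FG) :
    (I.radical ≤ J.radical ↔
      Loc.{u} {smod R (ModuleCat.of R (R ⧸ J))} ⊆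
        Loc.{u} {smod R (ModuleCat.of R (R ⧸ I))}) ∧
    (I.radical = J.radical ↔
      Loc.{u} {smod R (ModuleCat.of R (R ⧸ I))} =
        Loc.{u} {smod R (ModuleCat.of R (R ⧸ J))}) := by
  refine ⟨radical_le_iff_loc_subset_general I J hI, ?_⟩
  rw [le_antisymm_iff, radical_le_iff_loc_subset_general I J hI,
    radical_le_iff_loc_subset_general J I hJ, and_comm]
  exact (Set.Subset.antisymm_iff (a := Loc.{u} _)).symm
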